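/- arXiv:2410.01549 — 2 statements merged into one kernel-verified Lean document; each statement's English description precedes it below -/
import Mathlib

section
/- Let k ≥ 5 be odd and let m ≥ 6 be even. Set c = m−2 and d = m−4 if m ≡ 0 (mod 4), and c = m−1 and d = m−2 if m ≡ 2 (mod 4). Suppose there exists an edge 2-coloring of the complete graph on n vertices with no monochromatic copy of the kipas K̂_m. Then there exists a Gallai k-coloring of the complete graph on 2n + 10c(5^((k−3)/2) − 1) − 2d(k−3) vertices with no monochromatic copy of K̂_m. Consequently GR_k(K̂_m) ≥ 2(R_2(K̂_m) + 5c(5^((k−3)/2) − 1) − d(k−3)) − 1. -/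
open SimpleGraph

/-- A monochromatic copy of `H` in the graph `G` edge-colored by `c`:
an injective map sending edges of `H` to edges of `G`, all image edges of one color. -/
def IsMonoCopy {α V : Type*} {k : ℕ} (G : SimpleGraph V) (c : V → V → Fin k)
    (H : SimpleGraph α) : Prop :=
  ∃ (f : α → V) (i : Fin k), Function.Injective f ∧
    ∀ a b, H.Adj a b → G.Adj (f a) (f b) ∧ c (f a) (f b) = i

/-- The edge coloring `c` of `G` has no rainbow triangle. -/
def NoRainbowTriangle {V : Type*} {k : ℕ} (G : SimpleGraph V) (c : V → V → Fin k) : Prop :=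
  ¬ ∃ x y z : V, G.Adj x y ∧ G.Adj y z ∧ G.Adj x z ∧
    c x y ≠ c y z ∧ c y z ≠ c x z ∧ c x y ≠ c x z

/-- The Gallai–Ramsey number `GR_k(H)`: the least `N` such that every
rainbow-triangle-free `k`-edge-coloring of the complete graph on `N` vertices
contains a monochromatic copy of `H`. -/
noncomputable def GallaiRamsey (k : ℕ) {α : Type*} (H : SimpleGraph α) : ℕ :=
  sInf {N | ∀ c : Fin N → Fin N → Fin k, (∀ x y, c x y = c y x) →
    NoRainbowTriangle (⊤ : SimpleGraph (Fin N)) c →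
    IsMonoCopy (⊤ : SimpleGraph (Fin N)) c H}

/-- The diagonal two-color Ramsey number `R(H, H)`. -/
noncomputable def Ramsey2 {α : Type*} (H : SimpleGraph α) : ℕ :=
  sInf {N | ∀ c : Fin N → Fin N → Fin 2, (∀ x y, c x y = c y x) →
    IsMonoCopy (⊤ : SimpleGraph (Fin N)) c H}

/-- The fan `F_3 = K_1 + 3K_2`: vertex `0` is the center, joined to all other
vertices, together with the three disjoint edges `12`, `34`, `56`. -/
def fanF3 : SimpleGraph (Fin 7) :=
  SimpleGraph.fromRel (fun a b => a = 0 ∨ (a.val % 2 = 1 ∧ b.val = a.val + 1))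

/-- The kipas `K̂_m = K_1 + P_m`: vertex `0` is the center, joined to all other
vertices, and `1, 2, …, m` form a path. -/
def kipasG (m : ℕ) : SimpleGraph (Fin (m + 1)) :=
  SimpleGraph.fromRel (fun a b => a = 0 ∨ (1 ≤ a.val ∧ b.val = a.val + 1))

/-- The wheel `W_m = K_1 + C_m`: vertex `0` is the center, joined to all other
vertices, and `1, 2, …, m` form a cycle. -/
def wheelG (m : ℕ) : SimpleGraph (Fin (m + 1)) :=
  SimpleGraph.fromRel (fun a b =>
    a = 0 ∨ (1 ≤ a.val ∧ b.val = a.val + 1) ∨ (a.val = m ∧ b.val = 1))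

/-- The star `K_{1,n}`: vertex `0` is the center, joined to all other vertices. -/
def starG (n : ℕ) : SimpleGraph (Fin (n + 1)) :=
  SimpleGraph.fromRel (fun a _ => a = 0)

/-- `K⁺_{1,n}`, the star `K_{1,n}` with one edge subdivided: vertex `0` is joined to
`1, …, n`, and the extra vertex `n+1` is joined to `n`. -/
def starPlusG (n : ℕ) : SimpleGraph (Fin (n + 2)) :=
  SimpleGraph.fromRel (fun a b => (a = 0 ∧ b.val ≤ n) ∨ (a.val = n ∧ b.val = n + 1))

/-- The complete graph on `Fin N` with the single edge `{0, 1}` deleted. -/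
def compMinusEdge (N : ℕ) : SimpleGraph (Fin N) where
  Adj x y := x ≠ y ∧ ¬(x.val = 0 ∧ y.val = 1) ∧ ¬(x.val = 1 ∧ y.val = 0)
  symm := by
    constructor
    intro x y h
    exact ⟨h.1.symm, fun hc => h.2.2 ⟨hc.2, hc.1⟩, fun hc => h.2.1 ⟨hc.2, hc.1⟩⟩
  loopless := by constructor; intro x h; exact h.1 rfl

/-- The complete graph on `Fin M` together with one extra vertex (`none`)
joined exactly to the vertices of `A`. -/
def addVertex (M : ℕ) (A : Set (Fin M)) : SimpleGraph (Option (Fin M)) where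
  Adj x y := (∃ a b : Fin M, x = some a ∧ y = some b ∧ a ≠ b) ∨
    (∃ a ∈ A, (x = some a ∧ y = none) ∨ (x = none ∧ y = some a))
  symm := by
    constructor
    rintro x y (⟨a, b, hx, hy, hab⟩ | ⟨a, ha, (⟨hx, hy⟩ | ⟨hx, hy⟩)⟩)
    · exact Or.inl ⟨b, a, hy, hx, hab.symm⟩
    · exact Or.inr ⟨a, ha, Or.inr ⟨hy, hx⟩⟩
    · exact Or.inr ⟨a, ha, Or.inl ⟨hy, hx⟩⟩
  loopless := by
    constructor
    rintro x (⟨a, b, hx, hy, hab⟩ | ⟨a, ha, (⟨hx, hy⟩ | ⟨hx, hy⟩)⟩) <;> simp_all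

/-- The star-critical Gallai–Ramsey number `GR*_k(H)`: the least `s` such that
every rainbow-triangle-free `k`-edge-coloring of the complete graph on
`GR_k(H) - 1` vertices plus one extra vertex joined to exactly `s` of them
contains a monochromatic copy of `H`. -/
noncomputable def GRstar (k : ℕ) {α : Type*} (H : SimpleGraph α) : ℕ :=
  sInf {s | ∀ A : Finset (Fin (GallaiRamsey k H - 1)), A.card = s →
    ∀ c : Option (Fin (GallaiRamsey k H - 1)) → Option (Fin (GallaiRamsey k H - 1)) → Fin k,
      (∀ x y, c x y = c y x) →
      NoRainbowTriangle (addVertex (GallaiRamsey k H - 1) (↑A)) c →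
      IsMonoCopy (addVertex (GallaiRamsey k H - 1) (↑A)) c H}

/-- `H` is Gallai-Ramsey-full for `k` colors: the complete graph on `GR_k(H)`
vertices minus one edge admits a rainbow-triangle-free `k`-edge-coloring with
no monochromatic copy of `H`. -/
def GallaiRamseyFull (k : ℕ) {α : Type*} (H : SimpleGraph α) : Prop :=
  ∃ c : Fin (GallaiRamsey k H) → Fin (GallaiRamsey k H) → Fin k,
    (∀ x y, c x y = c y x) ∧
    NoRainbowTriangle (compMinusEdge (GallaiRamsey k H)) c ∧
    ¬ IsMonoCopy (compMinusEdge (GallaiRamsey k H)) c H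

/-- Reachability inside the vertex set `s`: there is a walk all of whose
vertices lie in `s`. -/
def ReachableWithin {V : Type*} (R : SimpleGraph V) (s : Set V) (u v : V) : Prop :=
  ∃ w : R.Walk u v, ∀ x ∈ w.support, x ∈ s

/-!
Blow up the pentagon coloring of `K₅`, which is triangle-free in both of its colors `a` and `b`,
placing Gallai colorings of complete graphs in the five parts. A kipas in color `a` has its center
in some part, and its path runs in that part and in the parts joined to it in color `a`, which are
pairwise not joined in color `a`. Suppose that color `a` is absent from one of any two parts it
joins. If the center's part does not contain color `a`, the whole path stays within a single
neighboring part. If it does, no neighboring part contains color `a`, so the path vertices in the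
center's part cover all the edges of the path, and the center has at least `m / 2` neighbors in its
own part. Hence no kipas arises when in each part color `a` has no path on `m` vertices and all its
degrees are less than `m / 2`. A complete graph on `c` vertices can be split into two such colors,
and a complete graph on `m / 2` vertices can be given one.

Each pentagon step consumes two new colors `a`, `b` and may put `a` in two of the parts and `b` in
two others. Building all the parts by the same procedure multiplies blocks carrying two such colors
by five in each step. Starting from the given 2-coloring and enlarging it by four increasingly large
one-color blocks in each of `(k - 3) / 2` steps, then doubling in the last color, gives the count.
-/

universe u

variable {α V W K : Type*}

/-- The color class of `i` under an edge coloring `c` of the complete graph. It is meaningful only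
for symmetric `c`, see `colorClass_adj`. -/
def colorClass (c : V → V → K) (i : K) : SimpleGraph V :=
  fromRel fun x y => c x y = i

theorem colorClass_adj {c : V → V → K} (hc : ∀ x y, c x y = c y x) {i : K} {x y : V} :
    (colorClass c i).Adj x y ↔ x ≠ y ∧ c x y = i := by
  rw [colorClass, fromRel_adj, hc y x, or_self]

theorem isMonoCopy_top_iff {k : ℕ} {c : V → V → Fin k} (hc : ∀ x y, c x y = c y x)
    {H : SimpleGraph α} : IsMonoCopy ⊤ c H ↔ ∃ i, H ⊑ colorClass c i := by
  constructor
  · rintro ⟨f, i, hf, h⟩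
    exact ⟨i, ⟨⟨f, fun hab => (colorClass_adj hc).2 (h _ _ hab)⟩, hf⟩⟩
  · rintro ⟨i, ⟨f⟩⟩
    exact ⟨f, i, f.injective, fun a b hab => (colorClass_adj hc).1 (f.toHom.map_rel hab)⟩

theorem ramsey_exists_isNClique [Finite K] (s : K → ℕ) :
    ∃ N, ∀ {V : Type u} (G : K → SimpleGraph V) (S : Finset V),
      (S : Set V).Pairwise (fun x y => ∃ i, (G i).Adj x y) → N ≤ S.card →
        ∃ i, ∃ T ⊆ S, (G i).IsNClique (s i) T := by
  classical
  have := Fintype.ofFinite K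
  induction hn : ∑ i, s i using Nat.strong_induction_on generalizing s with | _ n ih
  by_cases h0 : ∃ i, s i = 0
  · obtain ⟨i, hi⟩ := h0
    exact ⟨0, fun G S _ _ => ⟨i, ∅, S.empty_subset, by simp [hi]⟩⟩
  have hpos (i : K) : 0 < s i := Nat.pos_of_ne_zero fun hi => h0 ⟨i, hi⟩
  have hsum (i : K) : ∑ j, Function.update s i (s i - 1) j < n :=
    hn ▸ Finset.sum_lt_sum (fun j _ => by grind) ⟨i, Finset.mem_univ i, by grind⟩
  choose N hN using fun i => ih _ (hsum i) _ rfl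
  refine ⟨2 + ∑ i, N i, fun {V} G S hS hcard => ?_⟩
  obtain ⟨v, hv⟩ : S.Nonempty := Finset.card_pos.1 (by omega)
  let B (i : K) : Finset V := {x ∈ S | (G i).Adj v x}
  have hcover : S.erase v ⊆ Finset.univ.biUnion B := fun x hx => by
    have ⟨hxv, hxS⟩ := Finset.mem_erase.1 hx
    simpa [B, hxS] using hS hv hxS hxv.symm
  obtain ⟨i, -, hi⟩ : ∃ i ∈ Finset.univ, N i < (B i).card := by
    refine Finset.exists_lt_of_sum_lt ?_
    have := (Finset.card_le_card hcover).trans Finset.card_biUnion_le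
    rw [Finset.card_erase_of_mem hv] at this
    omega
  have hBS : B i ⊆ S := Finset.filter_subset _ _
  obtain ⟨j, T, hTB, hT⟩ := hN i G (B i) (hS.mono (Finset.coe_subset.2 hBS)) hi.le
  obtain rfl | hji := eq_or_ne j i
  · refine ⟨j, insert v T, Finset.insert_subset hv (hTB.trans hBS), ?_⟩
    rw [Function.update_self] at hT
    have := hT.insert fun x hx => (Finset.mem_filter.1 (hTB hx)).2
    rwa [Nat.sub_add_cancel (hpos j)] at this
  · exact ⟨j, T, hTB.trans hBS, by rwa [Function.update_of_ne hji] at hT⟩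

theorem ramsey_exists_isContained [Finite K] [Finite α] (H : SimpleGraph α) :
    ∃ N, ∀ {V : Type u} [Fintype V] (G : K → SimpleGraph V),
      (∀ x y, x ≠ y → ∃ i, (G i).Adj x y) → N ≤ Fintype.card V → ∃ i, H ⊑ G i := by
  have := Fintype.ofFinite α
  obtain ⟨N, hN⟩ := ramsey_exists_isNClique fun _ : K => Fintype.card α
  refine ⟨N, fun G hG hcard => ?_⟩
  obtain ⟨i, T, -, hT⟩ := hN G Finset.univ (fun x _ y _ => hG x y) hcard
  have hα : completeGraph (Fin (Fintype.card α)) ⊑ G i :=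
    (not_cliqueFree_iff_top_isContained _).1 hT.not_cliqueFree
  exact ⟨i, (IsContained.of_le le_top).trans
    ((Iso.completeGraph (Fintype.equivFin α)).isContained.trans hα)⟩

/-- The vertex set `V` carries a Gallai `k`-coloring with no monochromatic copy of `H`. -/
def HasFreeGallaiColoring (k : ℕ) (H : SimpleGraph α) (V : Type*) : Prop :=
  ∃ c : V → V → Fin k, (∀ x y, c x y = c y x) ∧ NoRainbowTriangle ⊤ c ∧ ¬ IsMonoCopy ⊤ c H

theorem HasFreeGallaiColoring.comap {k : ℕ} {H : SimpleGraph α}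
    (h : HasFreeGallaiColoring k H V) (e : W ↪ V) : HasFreeGallaiColoring k H W := by
  obtain ⟨c, hc, hrainbow, hmono⟩ := h
  refine ⟨fun x y => c (e x) (e y), fun x y => hc _ _, ?_, ?_⟩
  · rintro ⟨x, y, z, hxy, hyz, hxz, hne⟩
    exact hrainbow ⟨e x, e y, e z, e.injective.ne hxy, e.injective.ne hyz, e.injective.ne hxz, hne⟩
  · rintro ⟨f, i, hf, h⟩
    exact hmono ⟨e ∘ f, i, e.injective.comp hf,
      fun a b hab => ⟨e.injective.ne (h a b hab).1, (h a b hab).2⟩⟩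

theorem HasFreeGallaiColoring.lt_gallaiRamsey [Finite α] {k N : ℕ} {H : SimpleGraph α}
    (h : HasFreeGallaiColoring k H (Fin N)) : N < GallaiRamsey k H := by
  by_contra! hle
  obtain ⟨c, hc, hrainbow, hmono⟩ := h.comap (Fin.castLEEmb hle)
  obtain ⟨M, hM⟩ := ramsey_exists_isContained.{0} (K := Fin k) H
  have hmem : GallaiRamsey k H ∈ _ := Nat.sInf_mem ⟨M, fun c hc _ => (isMonoCopy_top_iff hc).2 <|
    hM (colorClass c) (fun x y hxy => ⟨c x y, (colorClass_adj hc).2 ⟨hxy, rfl⟩⟩)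
      (Fintype.card_fin M).ge⟩
  exact hmono (hmem c hc hrainbow)

theorem exists_not_isMonoCopy_ramsey2_sub_one [Nonempty α] (H : SimpleGraph α) :
    ∃ c : Fin (Ramsey2 H - 1) → Fin (Ramsey2 H - 1) → Fin 2,
      (∀ x y, c x y = c y x) ∧ ¬ IsMonoCopy ⊤ c H := by
  obtain h0 | hpos := Nat.eq_zero_or_pos (Ramsey2 H)
  · have : IsEmpty (Fin (Ramsey2 H - 1)) := by simp [h0, Fin.isEmpty]
    exact ⟨fun x => isEmptyElim x, fun x => isEmptyElim x,
      fun ⟨f, _⟩ => isEmptyElim (f (Classical.arbitrary α))⟩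
  · have hmin : Ramsey2 H - 1 ∉ _ := Nat.notMem_of_lt_sInf (Nat.sub_lt hpos one_pos)
    simpa only [Set.mem_ofPred_eq, not_forall, exists_prop] using hmin

/-- A Gallai coloring of the complete graph on `V` with palette `K`, given as the family of its
color classes. -/
structure IsGallaiColoring (G : K → SimpleGraph V) : Prop where
  existsUnique_adj : ∀ ⦃x y⦄, x ≠ y → ∃! i, (G i).Adj x y
  not_rainbow : ∀ ⦃x y z i j k⦄, (G i).Adj x y → (G j).Adj y z → (G k).Adj x z →
    i = j ∨ j = k ∨ i = k

theorem IsGallaiColoring.eq_of_adj {G : K → SimpleGraph V} (hG : IsGallaiColoring G) {x y : V}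
    {i j : K} (hi : (G i).Adj x y) (hj : (G j).Adj x y) : i = j :=
  (hG.existsUnique_adj hi.ne).unique hi hj

theorem IsGallaiColoring.comp_of_eq_bot {L : Type*} {G : K → SimpleGraph V}
    (hG : IsGallaiColoring G) {f : L → K} (hf : f.Injective) (hbot : ∀ i ∉ Set.range f, G i = ⊥) :
    IsGallaiColoring (G ∘ f) where
  existsUnique_adj x y hxy := by
    obtain ⟨i, hi, huniq⟩ := hG.existsUnique_adj hxy
    obtain ⟨j, rfl⟩ : i ∈ Set.range f := by
      by_contra h
      simp [hbot i h] at hi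
    exact ⟨j, hi, fun j' hj' => hf (huniq _ hj')⟩
  not_rainbow x y z i j k hi hj hk := by
    simpa only [hf.eq_iff] using hG.not_rainbow hi hj hk

theorem IsGallaiColoring.hasFreeGallaiColoring {k : ℕ} [NeZero k] {G : Fin k → SimpleGraph V}
    (hG : IsGallaiColoring G) {H : SimpleGraph α} (hfree : ∀ i, H.Free (G i)) :
    HasFreeGallaiColoring k H V := by
  let c (x y : V) : Fin k := Classical.epsilon fun i => (G i).Adj x y
  have hc (x y : V) : c x y = c y x := by simp only [c, adj_comm]
  have hadj {x y : V} (hxy : x ≠ y) : (G (c x y)).Adj x y :=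
    Classical.epsilon_spec (hG.existsUnique_adj hxy).exists
  refine ⟨c, hc, ?_, ?_⟩
  · rintro ⟨x, y, z, hxy, hyz, hxz, h₁, h₂, h₃⟩
    exact (hG.not_rainbow (hadj hxy) (hadj hyz) (hadj hxz)).elim h₁ (·.elim h₂ h₃)
  · rw [isMonoCopy_top_iff hc]
    rintro ⟨i, hi⟩
    refine hfree i (hi.mono_right fun x y hxy => ?_)
    obtain ⟨hne, rfl⟩ := (colorClass_adj hc).1 hxy
    exact hadj hne

/-- The coloring with palette `K` giving color `a` to the edges of `C` and color `b` to its
non-edges. For `a = b` it is monochromatic. -/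
def twoColoring (C : SimpleGraph V) (a b i : K) : SimpleGraph V where
  Adj x y := C.Adj x y ∧ i = a ∨ Cᶜ.Adj x y ∧ i = b
  symm := ⟨fun x y => by simp only [adj_comm, imp_self]⟩
  loopless := ⟨fun x => by simp⟩

section twoColoring

variable {C : SimpleGraph V} {a b i : K}

theorem isGallaiColoring_twoColoring (C : SimpleGraph V) (a b : K) :
    IsGallaiColoring (twoColoring C a b) where
  existsUnique_adj x y hxy := by
    by_cases h : C.Adj x y <;> simp [twoColoring, h, hxy]
  not_rainbow x y z i j k hi hj hk := by
    grind [twoColoring]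

theorem twoColoring_le (hi : i ≠ b) : twoColoring C a b i ≤ C :=
  fun _ _ h => h.elim And.left fun h => absurd h.2 hi

theorem twoColoring_le_compl (hi : i ≠ a) : twoColoring C a b i ≤ Cᶜ :=
  fun _ _ h => h.elim (fun h => absurd h.2 hi) And.left

theorem twoColoring_eq_bot (hi : i ∉ ({a, b} : Set K)) : twoColoring C a b i = ⊥ := by
  rw [Set.mem_insert_iff, Set.mem_singleton_iff, not_or] at hi
  exact le_bot_iff.1 <| (disjoint_compl_right : Disjoint C Cᶜ)
    (twoColoring_le hi.2) (twoColoring_le_compl hi.1)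

theorem twoColoring_cliqueFree {n : ℕ} (hC : C.CliqueFree n) (hC' : Cᶜ.CliqueFree n) (hab : a ≠ b)
    (i : K) : (twoColoring C a b i).CliqueFree n := by
  by_cases hi : i = b
  · exact hC'.anti (twoColoring_le_compl (hi ▸ hab.symm))
  · exact hC.anti (twoColoring_le hi)

end twoColoring

theorem cycleGraph_five_cliqueFree : (cycleGraph 5).CliqueFree 3 := fun t ht => by
  obtain ⟨x, y, z, hxy, hxz, hyz, -⟩ := is3Clique_iff.1 ht
  revert x y z
  decide

theorem compl_cycleGraph_five_cliqueFree : (cycleGraph 5)ᶜ.CliqueFree 3 := fun t ht => by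
  obtain ⟨x, y, z, hxy, hxz, hyz, -⟩ := is3Clique_iff.1 ht
  revert x y z
  decide

/-- The blow-up of `R` in which each vertex `j` is replaced by the graph `G j`, and vertices of
different parts are adjacent exactly when the parts are adjacent in `R`. -/
def blowUp {ι : Type*} {V : ι → Type*} (R : SimpleGraph ι) (G : ∀ j, SimpleGraph (V j)) :
    SimpleGraph (Σ j, V j) where
  Adj := Sigma.Lex R.Adj fun j => (G j).Adj
  symm := have := R.symm; have := fun j => (G j).symm; inferInstance
  loopless := have := R.loopless; have := fun j => (G j).loopless; inferInstance

section blowUp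

variable {ι : Type*} {P : ι → Type*} {R : SimpleGraph ι} {G : ∀ j, SimpleGraph (P j)}

@[simp]
theorem blowUp_adj_mk {j : ι} {x y : P j} : (blowUp R G).Adj ⟨j, x⟩ ⟨j, y⟩ ↔ (G j).Adj x y := by
  simp [blowUp, Sigma.lex_iff]

theorem blowUp_adj_of_ne {x y : Σ j, P j} (h : x.1 ≠ y.1) :
    (blowUp R G).Adj x y ↔ R.Adj x.1 y.1 := by
  simp [blowUp, Sigma.lex_iff, h]

theorem ne_bot_of_blowUp_adj {x y : Σ j, P j} (h : (blowUp R G).Adj x y) (hxy : y.1 = x.1) :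
    G x.1 ≠ ⊥ := by
  obtain ⟨⟨j, x⟩, ⟨_, y⟩⟩ := x, y
  obtain rfl : _ = j := hxy
  exact ne_bot_iff_exists_adj.2 ⟨x, y, blowUp_adj_mk.1 h⟩

theorem blowUp_bot_bot : blowUp (⊥ : SimpleGraph ι) (fun j => (⊥ : SimpleGraph (P j))) = ⊥ := by
  ext x y
  simp [blowUp, Sigma.lex_iff]

theorem IsGallaiColoring.blowUp {R : K → SimpleGraph ι} {G : ∀ j, K → SimpleGraph (P j)}
    (hR : IsGallaiColoring R) (hG : ∀ j, IsGallaiColoring (G j)) :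
    IsGallaiColoring fun i => blowUp (R i) fun j => G j i where
  existsUnique_adj := by
    rintro ⟨j, x⟩ ⟨k, y⟩ hxy
    obtain rfl | hjk := eq_or_ne j k
    · simpa using (hG j).existsUnique_adj (by simpa using hxy)
    · simpa [blowUp_adj_of_ne (x := ⟨j, x⟩) (y := ⟨k, y⟩) hjk] using hR.existsUnique_adj hjk
  not_rainbow := by
    intro x y z a b c ha hb hc
    by_cases hxy : x.1 = y.1 <;> by_cases hyz : y.1 = z.1
    · obtain ⟨⟨j, x⟩, ⟨_, y⟩, ⟨_, z⟩⟩ := x, y, z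
      obtain rfl : j = _ := hxy
      obtain rfl : j = _ := hyz
      simp only [blowUp_adj_mk] at ha hb hc
      exact (hG j).not_rainbow ha hb hc
    · rw [blowUp_adj_of_ne (hxy ▸ hyz), hxy] at hc
      exact .inr <| .inl <| hR.eq_of_adj ((blowUp_adj_of_ne hyz).1 hb) hc
    · rw [blowUp_adj_of_ne (hyz ▸ hxy), ← hyz] at hc
      exact .inr <| .inr <| hR.eq_of_adj ((blowUp_adj_of_ne hxy).1 ha) hc
    · rw [blowUp_adj_of_ne hxy] at ha
      rw [blowUp_adj_of_ne hyz] at hb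
      by_cases hxz : x.1 = z.1
      · exact .inl <| hR.eq_of_adj ha (hxz ▸ hb.symm)
      · exact hR.not_rainbow ha hb ((blowUp_adj_of_ne hxz).1 hc)

theorem encard_neighborSet_blowUp_inter_part (v : Σ j, P j) :
    {w | w.1 = v.1 ∧ (blowUp R G).Adj v w}.encard = ((G v.1).neighborSet v.2).encard := by
  rw [← (sigma_mk_injective (i := v.1)).encard_image]
  congr 1
  ext ⟨j, y⟩
  constructor
  · rintro ⟨rfl, h⟩
    exact ⟨y, blowUp_adj_mk.1 h, rfl⟩
  · rintro ⟨y, h, ⟨⟩⟩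
    exact ⟨rfl, blowUp_adj_mk.2 h⟩

theorem exists_isContained_of_copy_blowUp {A : SimpleGraph α} (hA : A.Connected)
    (f : Copy A (blowUp R G)) (hf : ∀ a b, A.Adj a b → (f a).1 = (f b).1) : ∃ j, A ⊑ G j := by
  have ⟨a₀⟩ := hA.nonempty
  have hpart (a : α) : ∃ x : P (f a₀).1, f a = ⟨(f a₀).1, x⟩ := by
    have heq : (f a).1 = (f a₀).1 := by
      obtain ⟨w⟩ := hA.preconnected a a₀
      induction w with
      | nil => rfl
      | cons h _ ih => exact (hf _ _ h).trans ih
    exact ⟨heq ▸ (f a).2, by grind⟩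
  choose g hg using hpart
  refine ⟨(f a₀).1, ⟨⟨g, fun {a b} hab => ?_⟩, fun a b (hab : g a = g b) => f.injective ?_⟩⟩
  · have hadj := f.toHom.map_rel hab
    simpa only [Copy.toHom_apply, hg a, hg b, blowUp_adj_mk] using hadj
  · rw [Copy.toHom_apply, Copy.toHom_apply, hg a, hg b, hab]

theorem free_blowUp_bot {A : SimpleGraph α} (hA : A.Connected) (hG : ∀ j, A.Free (G j)) :
    A.Free (blowUp ⊥ G) := fun ⟨f⟩ =>
  have ⟨j, hj⟩ := exists_isContained_of_copy_blowUp hA f fun a b hab => by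
    by_contra hne
    exact (blowUp_adj_of_ne hne).1 (f.toHom.map_rel hab)
  hG j hj

end blowUp

theorem exists_copy_pathGraph_of_kipasG_isContained {m : ℕ} {G : SimpleGraph V}
    (h : kipasG m ⊑ G) : ∃ v, ∃ p : Copy (pathGraph m) G, ∀ a, G.Adj v (p a) := by
  obtain ⟨f⟩ := h
  refine ⟨f 0, ⟨⟨f ∘ Fin.succ, fun {a b} hab => f.toHom.map_rel ?_⟩,
    f.injective.comp (Fin.succ_injective m)⟩, fun a => f.toHom.map_rel ?_⟩
  · rw [pathGraph_adj] at hab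
    simp only [kipasG, fromRel_adj]
    grind
  · simp only [kipasG, fromRel_adj]
    grind

theorem kipasG_connected (m : ℕ) : (kipasG m).Connected :=
  .of_isUniversal (v := 0) fun _ h => (fromRel_adj _ _ _).2 ⟨h, .inl (.inl rfl)⟩

theorem half_le_encard_of_isVertexCover_pathGraph {m : ℕ} {T : Set (Fin m)}
    (hT : (pathGraph m).IsVertexCover T) : (m / 2 : ℕ) ≤ T.encard := by
  have hsub : Set.Iio (m / 2) ⊆ (fun a : Fin m => a.val / 2) '' T := by
    intro t ht
    rw [Set.mem_Iio] at ht
    have hadj : (pathGraph m).Adj ⟨2 * t, by omega⟩ ⟨2 * t + 1, by omega⟩ := by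
      simp [pathGraph_adj]
    rcases hT hadj with h | h
    · exact ⟨_, h, by grind⟩
    · exact ⟨_, h, by grind⟩
  calc ((m / 2 : ℕ) : ℕ∞) = (Set.Iio (m / 2)).encard := by
        simp [← Finset.coe_Iio, Set.encard_coe_eq_coe_finsetCard]
    _ ≤ _ := Set.encard_le_encard hsub
    _ ≤ T.encard := Set.encard_image_le _ T

/-- A graph containing no path on `m` vertices and all of whose degrees are less than `m / 2`. A
color that is kipas-sparse inside every part of a triangle-free blow-up can be used again between
the parts, see `kipasG_free_blowUp`. -/
structure IsKipasSparse (m : ℕ) (G : SimpleGraph V) : Prop where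
  pathGraph_free : (pathGraph m).Free G
  encard_neighborSet_lt : ∀ v, (G.neighborSet v).encard < (m / 2 : ℕ)

theorem IsKipasSparse.kipasG_free {m : ℕ} {G : SimpleGraph V} (hG : IsKipasSparse m G) :
    (kipasG m).Free G := fun h =>
  have ⟨_, p, _⟩ := exists_copy_pathGraph_of_kipasG_isContained h
  hG.pathGraph_free ⟨p⟩

theorem IsKipasSparse.mono {m : ℕ} {G H : SimpleGraph V} (hH : IsKipasSparse m H) (h : G ≤ H) :
    IsKipasSparse m G where
  pathGraph_free := fun hG => hH.pathGraph_free (hG.mono_right h)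
  encard_neighborSet_lt v :=
    (Set.encard_le_encard fun _ hw => h hw).trans_lt (hH.encard_neighborSet_lt v)

theorem IsKipasSparse.of_card_lt [Fintype V] {m : ℕ} {G : SimpleGraph V} [DecidableRel G.Adj]
    (hV : Fintype.card V < m) (hG : ∀ v, G.degree v < m / 2) : IsKipasSparse m G where
  pathGraph_free := fun ⟨p⟩ => by
    have := Fintype.card_le_of_injective p p.injective
    rw [Fintype.card_fin] at this
    omega
  encard_neighborSet_lt v := by
    rw [← coe_neighborFinset, Set.encard_coe_eq_coe_finsetCard, card_neighborFinset_eq_degree]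
    exact_mod_cast hG v

section blowUp

variable {ι : Type*} {P : ι → Type*} {R : SimpleGraph ι} {G : ∀ j, SimpleGraph (P j)} {m : ℕ}

theorem IsKipasSparse.blowUp_bot (hm : 0 < m) (hG : ∀ j, IsKipasSparse m (G j)) :
    IsKipasSparse m (blowUp ⊥ G) where
  pathGraph_free := by
    obtain ⟨m, rfl⟩ := Nat.exists_eq_succ_of_ne_zero hm.ne'
    exact free_blowUp_bot (pathGraph_connected m) fun j => (hG j).pathGraph_free
  encard_neighborSet_lt v := by
    refine lt_of_le_of_lt (Set.encard_le_encard fun w hw => ?_)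
      (encard_neighborSet_blowUp_inter_part (R := ⊥) v ▸ (hG v.1).encard_neighborSet_lt v.2)
    exact ⟨by_contra fun hne => (blowUp_adj_of_ne (Ne.symm hne)).1 hw, hw⟩

theorem kipasG_free_blowUp (hR : R.CliqueFree 3) (hG : ∀ j, IsKipasSparse m (G j))
    (hbot : ∀ j k, R.Adj j k → G j = ⊥ ∨ G k = ⊥) : (kipasG m).Free (blowUp R G) := by
  intro h
  obtain ⟨v, p, hp⟩ := exists_copy_pathGraph_of_kipasG_isContained h
  have hadj {a : Fin m} (ha : (p a).1 ≠ v.1) : R.Adj v.1 (p a).1 :=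
    (blowUp_adj_of_ne ha.symm).1 (hp a)
  have hsame {a b : Fin m} (hab : (pathGraph m).Adj a b) (ha : (p a).1 ≠ v.1)
      (hb : (p b).1 ≠ v.1) : (p a).1 = (p b).1 := by
    by_contra hne
    exact isIndepSet_neighborSet_of_triangleFree R hR _ (hadj ha) (hadj hb) hne
      ((blowUp_adj_of_ne hne).1 (p.toHom.map_rel hab))
  by_cases hv : G v.1 = ⊥
  · have hout (a : Fin m) : (p a).1 ≠ v.1 := fun ha => ne_bot_of_blowUp_adj (hp a) ha hv
    have : Nonempty (Fin m) := Fin.pos_iff_nonempty.1 <| Nat.pos_of_ne_zero fun h => by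
      simpa [h] using (hG v.1).encard_neighborSet_lt v.2
    obtain ⟨j, hj⟩ := exists_isContained_of_copy_blowUp ⟨pathGraph_preconnected m⟩ p
      fun a b hab => hsame hab (hout a) (hout b)
    exact (hG j).pathGraph_free hj
  · have hcover : (pathGraph m).IsVertexCover {a | (p a).1 = v.1} := fun a b hab => by
      by_contra! ⟨ha, hb⟩
      have hne := ne_bot_of_blowUp_adj (p.toHom.map_rel hab) (hsame hab ha hb).symm
      exact (hbot _ _ (hadj ha)).elim hv hne
    refine (half_le_encard_of_isVertexCover_pathGraph hcover).not_gt ?_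
    calc {a | (p a).1 = v.1}.encard = (p '' {a | (p a).1 = v.1}).encard :=
          p.injective.encard_image _ |>.symm
      _ ≤ {w | w.1 = v.1 ∧ (blowUp R G).Adj v w}.encard := Set.encard_le_encard (by
          rintro _ ⟨a, ha, rfl⟩
          exact ⟨ha, hp a⟩)
      _ = ((G v.1).neighborSet v.2).encard := encard_neighborSet_blowUp_inter_part v
      _ < (m / 2 : ℕ) := (hG v.1).encard_neighborSet_lt v.2

end blowUp

/-- A Gallai coloring with no monochromatic kipas `K̂_m` whose palette is split into the *dense*
colors `D`, on which nothing more is required, and the *extra* colors `E`, whose classes are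
kipas-sparse; the remaining colors are not used. A blow-up in new colors adds these to `D`. -/
structure IsPaletteColoring (m : ℕ) (D E : Set K) (G : K → SimpleGraph V) : Prop
    extends IsGallaiColoring G where
  kipasG_free : ∀ i, (kipasG m).Free (G i)
  isKipasSparse : ∀ i ∉ D, IsKipasSparse m (G i)
  eq_bot : ∀ i ∉ D ∪ E, G i = ⊥

/-- Some complete graph on `N` vertices has a palette coloring, see `IsPaletteColoring`. -/
def HasPaletteColoring (m N : ℕ) (D E : Set K) : Prop :=
  ∃ (V : Type) (_ : Fintype V) (G : K → SimpleGraph V),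
    Fintype.card V = N ∧ IsPaletteColoring m D E G

namespace HasPaletteColoring

variable {m N : ℕ} {D E : Set K} {a b : K}

theorem mono_extra {E' : Set K} (hE : E ⊆ E') (h : HasPaletteColoring m N D E) :
    HasPaletteColoring m N D E' := by
  obtain ⟨V, _, G, hV, hG⟩ := h
  exact ⟨V, _, G, hV, { hG with
    eq_bot := fun i hi => hG.eq_bot i fun h => hi (Set.union_subset_union_right D hE h) }⟩

protected theorem blowUp {ι : Type} [Fintype ι] {R : K → SimpleGraph ι} {S : Set K} {N : ι → ℕ}
    {F : ι → Set K} (hm : 0 < m) (hR : IsGallaiColoring R) (htri : ∀ i, (R i).CliqueFree 3)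
    (hbot : ∀ i ∉ S, R i = ⊥) (hDS : Disjoint D S) (hF : ∀ j, F j ⊆ E ∪ S)
    (hRF : ∀ i j k, (R i).Adj j k → i ∉ F j ∨ i ∉ F k)
    (h : ∀ j, HasPaletteColoring m (N j) D (F j)) : HasPaletteColoring m (∑ j, N j) (D ∪ S) E := by
  choose V _ G hcard hG using h
  refine ⟨Σ j, V j, inferInstance, fun i => _root_.blowUp (R i) fun j => G j i, by simp [hcard],
    hR.blowUp fun j => (hG j).toIsGallaiColoring, fun i => ?_, fun i hi => ?_, fun i hi => ?_⟩
  · by_cases hiS : i ∈ S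
    · have hiD : i ∉ D := hDS.notMem_of_mem_right hiS
      refine kipasG_free_blowUp (htri i) (fun j => (hG j).isKipasSparse i hiD) fun j k hjk => ?_
      exact (hRF i j k hjk).imp (fun hj => (hG j).eq_bot i (by simp [hiD, hj]))
        fun hk => (hG k).eq_bot i (by simp [hiD, hk])
    · exact hbot i hiS ▸ free_blowUp_bot (kipasG_connected m) fun j => (hG j).kipasG_free i
  · rw [Set.mem_union, not_or] at hi
    exact hbot i hi.2 ▸ .blowUp_bot hm fun j => (hG j).isKipasSparse i hi.1
  · simp only [Set.mem_union, not_or] at hi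
    have hpart (j : ι) : G j i = ⊥ :=
      (hG j).eq_bot i fun h => h.elim hi.1.1 fun hj => (hF j hj).elim hi.2 hi.1.2
    simp only [hbot i hi.1.2, hpart, blowUp_bot_bot]

/-- The pentagon has color `a` and its complement color `b`. Color `a` may reappear inside the parts
`1` and `4` because these are joined in color `b`; symmetrically for the parts `2` and `3`. -/
theorem pentagon {N₀ N₁ N₂ : ℕ} (hm : 0 < m) (hab : a ≠ b) (ha : a ∉ D ∪ E) (hb : b ∉ D ∪ E)
    (h₀ : HasPaletteColoring m N₀ D E) (h₁ : HasPaletteColoring m N₁ D (insert a E))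
    (h₂ : HasPaletteColoring m N₂ D (insert b E)) :
    HasPaletteColoring m (N₀ + 2 * N₁ + 2 * N₂) (D ∪ {a, b}) E := by
  let C : SimpleGraph (Fin 5) := cycleGraph 5
  let F : Fin 5 → Set K := ![E, insert a E, insert b E, insert b E, insert a E]
  simp only [Set.mem_union, not_or] at ha hb
  have hRF (i : K) (j k : Fin 5) (hjk : (twoColoring C a b i).Adj j k) : i ∉ F j ∨ i ∉ F k := by
    have hC : ∀ j k : Fin 5, C.Adj j k → (j = 1 ∨ j = 4) → ¬ (k = 1 ∨ k = 4) := by decide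
    have hC' : ∀ j k : Fin 5, Cᶜ.Adj j k → (j = 2 ∨ j = 3) → ¬ (k = 2 ∨ k = 3) := by decide
    have haF (j : Fin 5) : a ∈ F j → j = 1 ∨ j = 4 := by fin_cases j <;> simp [F, ha.2, hab]
    have hbF (j : Fin 5) : b ∈ F j → j = 2 ∨ j = 3 := by fin_cases j <;> simp [F, hb.2, hab.symm]
    obtain ⟨hjk, rfl⟩ | ⟨hjk, rfl⟩ := hjk
    · exact not_and_or.1 fun h => hC j k hjk (haF j h.1) (haF k h.2)
    · exact not_and_or.1 fun h => hC' j k hjk (hbF j h.1) (hbF k h.2)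
  have hF (j : Fin 5) : F j ⊆ E ∪ {a, b} := by
    have hE : E ⊆ E ∪ {a, b} := Set.subset_union_left
    fin_cases j
    exacts [hE, Set.insert_subset (by simp) hE, Set.insert_subset (by simp) hE,
      Set.insert_subset (by simp) hE, Set.insert_subset (by simp) hE]
  have hpart (j : Fin 5) : HasPaletteColoring m (![N₀, N₁, N₂, N₂, N₁] j) D (F j) := by
    fin_cases j <;> assumption
  have := HasPaletteColoring.blowUp hm (isGallaiColoring_twoColoring C a b)
    (twoColoring_cliqueFree cycleGraph_five_cliqueFree compl_cycleGraph_five_cliqueFree hab)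
    (fun _ => twoColoring_eq_bot) (by simp [Set.disjoint_insert_right, ha.1, hb.1]) hF hRF hpart
  have hsum : ∑ j, ![N₀, N₁, N₂, N₂, N₁] j = N₀ + 2 * N₁ + 2 * N₂ := by
    rw [Fin.sum_univ_five]
    dsimp
    ring
  rwa [hsum] at this

theorem double (hm : 0 < m) (ha : a ∉ D ∪ E) (h : HasPaletteColoring m N D E) :
    HasPaletteColoring m (2 * N) (D ∪ {a}) E := by
  simp only [Set.mem_union, not_or] at ha
  have hE (i : K) (j k : Fin 2) (hjk : (twoColoring ⊤ a a i).Adj j k) : i ∉ E ∨ i ∉ E := by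
    obtain ⟨-, rfl⟩ | ⟨-, rfl⟩ := hjk <;> exact .inl ha.2
  have := HasPaletteColoring.blowUp hm (isGallaiColoring_twoColoring ⊤ a a)
    (fun i => cliqueFree_of_card_lt (by simp)) (fun _ hi => twoColoring_eq_bot (by simpa using hi))
    (Set.disjoint_singleton_right.2 ha.1)
    (fun _ => Set.subset_union_left) hE fun _ => h
  simpa using this

end HasPaletteColoring

theorem exists_isRegularOfDegree_two_mul {c w : ℕ} [NeZero c] (h : 2 * w < c) :
    ∃ (C : SimpleGraph (ZMod c)) (_ : DecidableRel C.Adj), C.IsRegularOfDegree (2 * w) := by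
  classical
  let A : Finset (ZMod c) := {x | x.val ∈ Finset.Icc 1 w}
  have hA : A.card = w := by
    have himage : A.image ZMod.val = Finset.Icc 1 w := by
      ext t
      simp only [A, Finset.mem_image, Finset.mem_filter_univ]
      refine ⟨by rintro ⟨x, hx, rfl⟩; exact hx, fun ht => ⟨t, ?_⟩⟩
      rw [ZMod.val_natCast_of_lt (by grind)]
      exact ⟨ht, rfl⟩
    rw [← Finset.card_image_of_injective A (ZMod.val_injective c), himage, Nat.card_Icc,
      Nat.add_sub_cancel]
  have hdisj : Disjoint A (A.map (Equiv.neg _).toEmbedding) := by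
    rw [Finset.disjoint_left]
    intro x hx hx'
    obtain ⟨y, hy, rfl⟩ := Finset.mem_map.1 hx'
    simp only [A, Finset.mem_filter_univ, Finset.mem_Icc, Equiv.toEmbedding_apply,
      Equiv.neg_apply, ZMod.neg_val] at hx hy
    split_ifs at hx <;> omega
  refine ⟨circulantGraph A, inferInstance, fun v => ?_⟩
  have hnbr : (circulantGraph (A : Set (ZMod c))).neighborFinset v =
      (A.disjUnion _ hdisj).map (Equiv.addLeft v).toEmbedding := by
    ext x
    have h0 : (0 : ZMod c) ∉ A := by simp [A]
    have hne : v - x ∈ A ∨ x - v ∈ A → v ≠ x := by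
      rintro h rfl
      simp [h0] at h
    simp [circulantGraph_adj, Finset.mem_map_equiv, neg_add_eq_sub, or_comm,
      and_iff_right_of_imp hne]
  rw [← card_neighborFinset_eq_degree, hnbr, Finset.card_map, Finset.card_disjUnion,
    Finset.card_map, hA, two_mul]

theorem isKipasSparse_bot {m : ℕ} (hm : 2 ≤ m) : IsKipasSparse m (⊥ : SimpleGraph V) where
  pathGraph_free := fun ⟨p⟩ => by
    have hadj : (pathGraph m).Adj ⟨0, by omega⟩ ⟨1, by omega⟩ := by simp [pathGraph_adj]
    exact p.toHom.map_rel hadj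
  encard_neighborSet_lt v := by
    simpa [neighborSet] using hm

theorem isPaletteColoring_twoColoring {m : ℕ} {C : SimpleGraph V} {a b : K}
    (h : ∀ i, IsKipasSparse m (twoColoring C a b i)) :
    IsPaletteColoring m ∅ {a, b} (twoColoring C a b) where
  toIsGallaiColoring := isGallaiColoring_twoColoring C a b
  kipasG_free i := (h i).kipasG_free
  isKipasSparse i _ := h i
  eq_bot i hi := twoColoring_eq_bot (by rwa [Set.empty_union] at hi)

theorem hasPaletteColoring_singleton {m : ℕ} (hm : 0 < m) (a : K) :
    HasPaletteColoring m (m / 2) ∅ {a} := by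
  refine ⟨Fin (m / 2), inferInstance, twoColoring ⊤ a a, Fintype.card_fin _, ?_⟩
  have htop : IsKipasSparse m (⊤ : SimpleGraph (Fin (m / 2))) :=
    .of_card_lt (by simpa using Nat.div_lt_self hm one_lt_two) fun v => by
      simpa using degree_lt_card_verts (G := ⊤) v
  rw [← Set.pair_eq_singleton]
  exact isPaletteColoring_twoColoring fun i => htop.mono le_top

theorem hasPaletteColoring_pair {m c w : ℕ} (hcm : c < m) (hwc : 2 * w < c) (hw : 2 * w < m / 2)
    (hw' : c - 1 - 2 * w < m / 2) {a b : K} (hab : a ≠ b) :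
    HasPaletteColoring m c ∅ {a, b} := by
  have : NeZero c := ⟨by omega⟩
  classical
  obtain ⟨C, _, hC⟩ := exists_isRegularOfDegree_two_mul hwc
  have hcard : Fintype.card (ZMod c) = c := ZMod.card c
  have hcard_lt : Fintype.card (ZMod c) < m := by rwa [hcard]
  have hsparse : IsKipasSparse m C := .of_card_lt hcard_lt fun v => by rwa [hC v]
  have hsparse' : IsKipasSparse m Cᶜ := .of_card_lt hcard_lt fun v => by
    rwa [degree_compl, hC v, hcard]
  refine ⟨ZMod c, inferInstance, twoColoring C a b, hcard,
    isPaletteColoring_twoColoring fun i => ?_⟩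
  by_cases hi : i = b
  · exact hsparse'.mono (twoColoring_le_compl (hi ▸ hab.symm))
  · exact hsparse.mono (twoColoring_le hi)

theorem hasPaletteColoring_of_not_isMonoCopy {m n : ℕ} (hm : 2 ≤ m) {χ : Fin n → Fin n → Fin 2}
    (hχ : ∀ x y, χ x y = χ y x) (hfree : ¬ IsMonoCopy ⊤ χ (kipasG m)) {a b : K} (hab : a ≠ b) :
    HasPaletteColoring m n {a, b} ∅ := by
  rw [isMonoCopy_top_iff hχ, not_exists] at hfree
  have hcompl : (colorClass χ 0)ᶜ ≤ colorClass χ 1 := fun x y hxy => by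
    rw [compl_adj, colorClass_adj hχ] at hxy
    exact (colorClass_adj hχ).2 ⟨hxy.1, Fin.eq_one_of_ne_zero _ fun h => hxy.2 ⟨hxy.1, h⟩⟩
  refine ⟨Fin n, inferInstance, twoColoring (colorClass χ 0) a b, Fintype.card_fin n,
    isGallaiColoring_twoColoring _ a b, fun i => ?_, fun i hi => ?_, fun i hi => ?_⟩
  · by_cases hi : i = b
    · exact fun h => hfree 1 (h.mono_right ((twoColoring_le_compl (hi ▸ hab.symm)).trans hcompl))
    · exact fun h => hfree 0 (h.mono_right (twoColoring_le hi))
  · exact twoColoring_eq_bot hi ▸ isKipasSparse_bot hm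
  · exact twoColoring_eq_bot (by rwa [Set.union_empty] at hi)

namespace HasPaletteColoring

variable {m N c r s : ℕ} {E : Set ℕ}

theorem pentagon_Iio {N₀ N₁ N₂ : ℕ} (hm : 0 < m) (hE : ∀ i ∈ E, 2 * (s + 1) ≤ i)
    (h₀ : HasPaletteColoring m N₀ (Set.Iio (2 * s)) E)
    (h₁ : HasPaletteColoring m N₁ (Set.Iio (2 * s)) (insert (2 * s) E))
    (h₂ : HasPaletteColoring m N₂ (Set.Iio (2 * s)) (insert (2 * s + 1) E)) :
    HasPaletteColoring m (N₀ + 2 * N₁ + 2 * N₂) (Set.Iio (2 * (s + 1))) E := by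
  have hIio : Set.Iio (2 * (s + 1)) = Set.Iio (2 * s) ∪ {2 * s, 2 * s + 1} := by
    ext i
    simp only [Set.mem_Iio, Set.mem_union, Set.mem_insert_iff, Set.mem_singleton_iff]
    omega
  rw [hIio]
  have hmem (a : ℕ) (ha : 2 * s ≤ a) (ha' : a < 2 * (s + 1)) : a ∉ Set.Iio (2 * s) ∪ E :=
    fun h => h.elim (fun h => ha.not_gt h) fun h => (hE a h).not_gt ha'
  exact pentagon hm (by simp) (hmem _ le_rfl (by omega)) (hmem _ (by omega) (by omega)) h₀ h₁ h₂

theorem pow_five_mul (hm : 0 < m)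
    (hpair : ∀ p q : ℕ, p ≠ q → HasPaletteColoring m c ∅ {p, q}) {p q : ℕ} (hpq : p ≠ q)
    (hp : 2 * s ≤ p) (hq : 2 * s ≤ q) :
    HasPaletteColoring m (5 ^ s * c) (Set.Iio (2 * s)) {p, q} := by
  induction s generalizing p q with
  | zero => simpa using hpair p q hpq
  | succ s ih =>
    have h (a : ℕ) (ha : 2 * s ≤ a) (hap : a ≠ p) :
        HasPaletteColoring m (5 ^ s * c) (Set.Iio (2 * s)) (insert a {p, q}) :=
      (ih hap ha (by omega)).mono_extra (Set.insert_subset_insert (by simp))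
    have := pentagon_Iio hm (by rintro i (rfl | rfl) <;> assumption)
      (ih hpq (by omega) (by omega)) (h (2 * s) le_rfl (by omega))
      (h (2 * s + 1) (by omega) (by omega))
    convert this using 1
    ring

theorem add_pow_five_sub_one_mul (hm : 0 < m)
    (hpair : ∀ p q : ℕ, p ≠ q → HasPaletteColoring m c ∅ {p, q}) {z : ℕ}
    (hz : 2 * s ≤ z) (hsingle : HasPaletteColoring m r ∅ {z}) :
    HasPaletteColoring m (r + (5 ^ s - 1) * c) (Set.Iio (2 * s)) {z} := by
  induction s with
  | zero => simpa using hsingle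
  | succ s ih =>
    have h (a : ℕ) (ha : 2 * s ≤ a) (haz : a ≠ z) :
        HasPaletteColoring m (5 ^ s * c) (Set.Iio (2 * s)) (insert a {z}) :=
      pow_five_mul hm hpair haz ha (by omega)
    have := pentagon_Iio hm (by rintro i rfl; exact hz) (ih (by omega))
      (h (2 * s) le_rfl (by omega)) (h (2 * s + 1) (by omega) (by omega))
    convert this using 1
    obtain ⟨x, hx⟩ := Nat.exists_eq_add_of_le (Nat.one_le_pow s 5 (by norm_num))
    rw [pow_succ, hx, Nat.add_sub_cancel_left, show (1 + x) * 5 - 1 = 4 + 5 * x by omega]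
    ring

theorem add_sum_range (hm : 0 < m)
    (hpair : ∀ p q : ℕ, p ≠ q → HasPaletteColoring m c ∅ {p, q})
    (hsingle : ∀ z : ℕ, HasPaletteColoring m r ∅ {z})
    (h : HasPaletteColoring m N (Set.Iio 2) (∅ : Set ℕ)) (t : ℕ) :
    HasPaletteColoring m (N + ∑ s ∈ Finset.range t, 4 * (r + (5 ^ (s + 1) - 1) * c))
      (Set.Iio (2 * (t + 1))) ∅ := by
  induction t with
  | zero => simpa using h
  | succ t ih =>
    have hL (a : ℕ) (ha : 2 * (t + 1) ≤ a) : HasPaletteColoring m (r + (5 ^ (t + 1) - 1) * c)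
        (Set.Iio (2 * (t + 1))) (insert a ∅) := by
      rw [insert_empty_eq]
      exact add_pow_five_sub_one_mul hm hpair ha (hsingle a)
    have := pentagon_Iio hm (by simp) ih (hL _ le_rfl) (hL _ (by omega))
    convert this using 1
    rw [Finset.sum_range_succ]
    ring

theorem hasFreeGallaiColoring {k : ℕ} [NeZero k]
    (h : HasPaletteColoring m N (Set.Iio k) (∅ : Set ℕ)) :
    HasFreeGallaiColoring k (kipasG m) (Fin N) := by
  obtain ⟨V, _, G, hV, hG⟩ := h
  have hbot (i : ℕ) (hi : i ∉ Set.range (Fin.val : Fin k → ℕ)) : G i = ⊥ :=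
    hG.eq_bot i fun h => hi <| by simpa using h
  have hGk := hG.toIsGallaiColoring.comp_of_eq_bot Fin.val_injective hbot
  exact (hGk.hasFreeGallaiColoring fun i => hG.kipasG_free i).comap
    (Fintype.equivFinOfCardEq hV).symm.toEmbedding

end HasPaletteColoring

theorem sum_range_four_mul_add {m c d : ℕ} (hme : Even m) (hcd : 2 * c = d + m) (t : ℕ) :
    (∑ s ∈ Finset.range t, 4 * (m / 2 + (5 ^ (s + 1) - 1) * c)) + 2 * (d * t) =
      5 * c * (5 ^ t - 1) := by
  induction t with
  | zero => simp
  | succ t ih =>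
    obtain ⟨x, hx⟩ := Nat.exists_eq_add_of_le (Nat.one_le_pow t 5 (by norm_num))
    have hm : 2 * (m / 2) = m := Nat.two_mul_div_two_of_even hme
    rw [Finset.sum_range_succ, pow_succ, hx, show (1 + x) * 5 - 1 = 4 + 5 * x by omega]
    rw [hx, Nat.add_sub_cancel_left] at ih
    linear_combination ih + 2 * hm - 2 * hcd

theorem hasFreeGallaiColoring_two_mul_add_three {m n c d : ℕ} (hm : 2 ≤ m)
    (hcd : (m % 4 = 0 ∧ c = m - 2 ∧ d = m - 4) ∨ (m % 4 = 2 ∧ c = m - 1 ∧ d = m - 2))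
    {χ : Fin n → Fin n → Fin 2} (hχ : ∀ x y, χ x y = χ y x)
    (hfree : ¬ IsMonoCopy ⊤ χ (kipasG m)) (t : ℕ) :
    HasFreeGallaiColoring (2 * t + 3) (kipasG m)
      (Fin (2 * (n + 5 * c * (5 ^ t - 1) - 2 * (d * t)))) := by
  -- The degree `2 * w` is the largest even number below `m / 2`.
  have hpair (p q : ℕ) (hpq : p ≠ q) : HasPaletteColoring m c ∅ {p, q} :=
    hasPaletteColoring_pair (w := (m / 2 - 1) / 2) (by omega) (by omega) (by omega) (by omega) hpq
  have hstart : HasPaletteColoring m n (Set.Iio 2) (∅ : Set ℕ) := by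
    rw [show Set.Iio 2 = ({0, 1} : Set ℕ) by grind]
    exact hasPaletteColoring_of_not_isMonoCopy hm hχ hfree zero_ne_one
  have hdouble := (HasPaletteColoring.add_sum_range (by omega) hpair
    (hasPaletteColoring_singleton (by omega)) hstart t).double (by omega)
    (a := 2 * (t + 1)) (by simp)
  have hIio : Set.Iio (2 * (t + 1)) ∪ {2 * (t + 1)} = Set.Iio (2 * t + 3) := by
    ext
    simp only [Set.mem_union, Set.mem_Iio, Set.mem_singleton_iff]
    omega
  rw [hIio] at hdouble
  have hme : Even m := Nat.even_iff.2 (by omega)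
  have hcdm : 2 * c = d + m := by omega
  rw [← sum_range_four_mul_add hme hcdm t, ← Nat.add_assoc, Nat.add_sub_cancel]
  exact hdouble.hasFreeGallaiColoring

theorem kipas_gallai_lower_odd_k_general {k m c d : ℕ} (hk : 3 ≤ k) (hko : k % 2 = 1)
    (hm : 2 ≤ m)
    (hcd : (m % 4 = 0 ∧ c = m - 2 ∧ d = m - 4) ∨ (m % 4 = 2 ∧ c = m - 1 ∧ d = m - 2)) :
    (∀ {n : ℕ} (χ : Fin n → Fin n → Fin 2), (∀ x y, χ x y = χ y x) →
      ¬ IsMonoCopy ⊤ χ (kipasG m) → HasFreeGallaiColoring k (kipasG m)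
        (Fin (2 * n + 10 * c * (5 ^ ((k - 3) / 2) - 1) - 2 * d * (k - 3)))) ∧
    2 * (Ramsey2 (kipasG m) + 5 * c * (5 ^ ((k - 3) / 2) - 1) - d * (k - 3)) - 1 ≤
      GallaiRamsey k (kipasG m) := by
  obtain ⟨t, rfl⟩ : ∃ t, k = 2 * t + 3 := ⟨(k - 3) / 2, by omega⟩
  have ht : (2 * t + 3 - 3) / 2 = t := by omega
  have hd : d * (2 * t + 3 - 3) = 2 * (d * t) := by
    rw [Nat.add_sub_cancel, mul_left_comm]
  have hc : 10 * c * (5 ^ t - 1) = 2 * (5 * c * (5 ^ t - 1)) := by ring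
  simp only [ht, mul_assoc 2 d, hd, hc, ← mul_add, ← Nat.mul_sub]
  refine ⟨fun χ hχ hfree => hasFreeGallaiColoring_two_mul_add_three hm hcd hχ hfree t, ?_⟩
  obtain ⟨χ, hχ, hfree⟩ := exists_not_isMonoCopy_ramsey2_sub_one (kipasG m)
  have hlt := (hasFreeGallaiColoring_two_mul_add_three hm hcd hχ hfree t).lt_gallaiRamsey
  have hle : 2 * (d * t) ≤ 5 * c * (5 ^ t - 1) := by
    have hme : Even m := Nat.even_iff.2 (by omega)
    have hcdm : 2 * c = d + m := by omega
    rw [← sum_range_four_mul_add hme hcdm t]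
    exact Nat.le_add_left _ _
  omega

/-- Odd `k ≥ 5`, even `m ≥ 6`: from a 2-coloring of `K_n` with no monochromatic
kipas `K̂_m`, one gets a Gallai `k`-coloring of a larger complete graph with no
monochromatic `K̂_m`; consequently the Gallai–Ramsey lower bound. -/
theorem kipas_gallai_lower_odd_k (k m n c d : ℕ) (hk : 5 ≤ k) (hko : k % 2 = 1)
    (hm : 6 ≤ m) (hme : m % 2 = 0)
    (hcd : (m % 4 = 0 ∧ c = m - 2 ∧ d = m - 4) ∨ (m % 4 = 2 ∧ c = m - 1 ∧ d = m - 2))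
    (h2 : ∃ χ : Fin n → Fin n → Fin 2, (∀ x y, χ x y = χ y x) ∧
      ¬ IsMonoCopy (⊤ : SimpleGraph (Fin n)) χ (kipasG m)) :
    (∃ χ : Fin (2 * n + 10 * c * (5 ^ ((k - 3) / 2) - 1) - 2 * d * (k - 3)) →
        Fin (2 * n + 10 * c * (5 ^ ((k - 3) / 2) - 1) - 2 * d * (k - 3)) → Fin k,
      (∀ x y, χ x y = χ y x) ∧
      NoRainbowTriangle (⊤ : SimpleGraph (Fin (2 * n + 10 * c * (5 ^ ((k - 3) / 2) - 1) - 2 * d * (k - 3)))) χ ∧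
      ¬ IsMonoCopy (⊤ : SimpleGraph (Fin (2 * n + 10 * c * (5 ^ ((k - 3) / 2) - 1) - 2 * d * (k - 3)))) χ (kipasG m)) ∧
    2 * (Ramsey2 (kipasG m) + 5 * c * (5 ^ ((k - 3) / 2) - 1) - d * (k - 3)) - 1 ≤
      GallaiRamsey k (kipasG m) := by
  have h := kipas_gallai_lower_odd_k_general (by omega : 3 ≤ k) hko (by omega : 2 ≤ m) hcd
  exact ⟨h2.elim fun χ hχ => h.1 χ hχ.1 hχ.2, h.2⟩
end

section
/- For every integer m ≥ 6, there exists a Gallai 3-coloring of the complete graph on 5m vertices with no monochromatic copy of the kipas K̂_m. Consequently GR_3(K̂_m) ≥ 5m + 1. -/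
open SimpleGraph

/-!
Colour `K₅` with two edge-disjoint pentagons, blow each vertex up to `n` vertices and use the third
colour inside the parts. A triangle meeting three parts misses the third colour, and a triangle
meeting two parts has two equal edges, so no triangle is rainbow. Pentagons are triangle-free, so a
monochromatic copy of a graph with a triangle must have the third colour; if the graph is connected,
the copy then stays in one part and has at most `n` vertices.

The bound on `GallaiRamsey` also needs Ramsey's theorem: it is an infimum of natural numbers, which
would be `0` if every `N` admitted a good colouring.
-/

section Restriction

variable {α V W : Type*} {k : ℕ} {G : SimpleGraph V} {G' : SimpleGraph W} {c : V → V → Fin k}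

theorem NoRainbowTriangle.comp_hom (h : NoRainbowTriangle G c) (φ : G' →g G) :
    NoRainbowTriangle G' (fun x y => c (φ x) (φ y)) := by
  rintro ⟨x, y, z, hxy, hyz, hxz, hne⟩
  exact h ⟨φ x, φ y, φ z, φ.map_adj hxy, φ.map_adj hyz, φ.map_adj hxz, hne⟩

theorem IsMonoCopy.of_comp_copy {H : SimpleGraph α} (φ : Copy G' G)
    (h : IsMonoCopy G' (fun x y => c (φ x) (φ y)) H) : IsMonoCopy G c H := by
  obtain ⟨f, i, hf, hmono⟩ := h
  exact ⟨φ ∘ f, i, φ.injective.comp hf,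
    fun a b hab => ⟨φ.toHom.map_adj (hmono a b hab).1, (hmono a b hab).2⟩⟩

end Restriction

section Ramsey

theorem exists_forall_color_eq_of_lt (ι : Type*) [Finite ι] (n : ℕ) :
    ∃ N, ∀ {V : Type*} (c : V → V → ι) (A : Finset V), N ≤ A.card →
      ∃ (v : Fin n → V) (d : Fin n → ι), (∀ a, v a ∈ A) ∧
        ∀ a b, a < b → v a ≠ v b ∧ c (v a) (v b) = d a := by
  have := Fintype.ofFinite ι
  classical
  induction n with
  | zero => exact ⟨0, fun _ _ _ => ⟨Fin.elim0, Fin.elim0, fun a => a.elim0, fun a => a.elim0⟩⟩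
  | succ n ih =>
    obtain ⟨N, hN⟩ := ih
    refine ⟨Fintype.card ι * N + 1, fun c A hA => ?_⟩
    obtain ⟨x, hx⟩ : A.Nonempty := Finset.card_pos.mp (by omega)
    have hcard : Fintype.card ι * N ≤ (A.erase x).card := by
      rw [Finset.card_erase_of_mem hx]
      omega
    obtain ⟨i, -, hi⟩ := Finset.exists_le_card_fiber_of_mul_le_card_of_maps_to
      (fun y _ => Finset.mem_univ (c x y)) ⟨c x x, Finset.mem_univ _⟩ hcard
    obtain ⟨v, d, hv, hd⟩ := hN c _ hi
    simp only [Finset.mem_filter, Finset.mem_erase] at hv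
    refine ⟨Fin.cons x v, Fin.cons i d, Fin.cases hx fun a => (hv a).1.2, ?_⟩
    refine Fin.cases (Fin.cases (fun h => absurd h (lt_irrefl _))
      fun b _ => ⟨(hv b).1.1.symm, (hv b).2⟩) fun a => ?_
    exact Fin.cases (fun h => absurd h (Fin.not_lt_zero _))
      fun b hab => hd a b (Fin.succ_lt_succ_iff.mp hab)

theorem exists_forall_monochromatic (ι : Type*) [Finite ι] (m : ℕ) :
    ∃ N, ∀ {V : Type*} [Fintype V] (c : V → V → ι), (∀ x y, c x y = c y x) →
      N ≤ Fintype.card V → ∃ (f : Fin m → V) (i : ι), Function.Injective f ∧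
        ∀ a b, a ≠ b → c (f a) (f b) = i := by
  have := Fintype.ofFinite ι
  classical
  obtain ⟨N, hN⟩ := exists_forall_color_eq_of_lt ι (Fintype.card ι * m + 1)
  refine ⟨N, fun c hc hcard => ?_⟩
  obtain ⟨v, d, -, hd⟩ := hN c Finset.univ hcard
  have : Nonempty ι := ⟨d 0⟩
  obtain ⟨i, hi⟩ := Fintype.exists_le_card_fiber_of_mul_le_card (n := m) d (by simp)
  let e := Finset.orderEmbOfCardLe _ hi
  have he (a : Fin m) : d (e a) = i :=
    (Finset.mem_filter.mp (Finset.orderEmbOfCardLe_mem _ hi a)).2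
  have hlt {a b : Fin m} (hab : a < b) : v (e a) ≠ v (e b) ∧ c (v (e a)) (v (e b)) = i :=
    he a ▸ hd _ _ (e.lt_iff_lt.mpr hab)
  refine ⟨v ∘ e, i, fun a b hab => ?_, fun a b hab => ?_⟩
  · by_contra hne
    exact (Ne.lt_or_gt hne).elim (fun h => (hlt h).1 hab) fun h => (hlt h).1 hab.symm
  · exact hab.lt_or_gt.elim (fun h => (hlt h).2) fun h => (hc _ _).trans (hlt h).2

theorem exists_forall_isMonoCopy (k : ℕ) {α : Type*} [Finite α] (H : SimpleGraph α) :
    ∃ N, ∀ c : Fin N → Fin N → Fin k, (∀ x y, c x y = c y x) → IsMonoCopy ⊤ c H := by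
  obtain ⟨N, hN⟩ := exists_forall_monochromatic (Fin k) (Nat.card α)
  refine ⟨N, fun c hc => ?_⟩
  obtain ⟨f, i, hf, hmono⟩ := hN c hc (Fintype.card_fin N).ge
  have hinj := hf.comp (Finite.equivFin α).injective
  exact ⟨_, i, hinj, fun a b hab =>
    ⟨hinj.ne hab.ne, hmono _ _ ((Finite.equivFin α).injective.ne hab.ne)⟩⟩

theorem lt_gallaiRamsey {k N : ℕ} {α : Type*} [Finite α] {H : SimpleGraph α}
    {c : Fin N → Fin N → Fin k} (hc : ∀ x y, c x y = c y x) (hgallai : NoRainbowTriangle ⊤ c)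
    (hmono : ¬ IsMonoCopy ⊤ c H) : N < GallaiRamsey k H := by
  obtain ⟨N₀, hN₀⟩ := exists_forall_isMonoCopy k H
  refine le_csInf ⟨N₀, Set.mem_ofPred.mpr fun c hc _ => hN₀ c hc⟩ fun M hM => ?_
  by_contra! hlt
  let φ := Embedding.completeGraph (Fin.castLEEmb (Nat.le_of_lt_succ hlt))
  exact hmono <| .of_comp_copy φ.toCopy <| hM _ (fun _ _ => hc _ _) (hgallai.comp_hom φ.toHom)

end Ramsey

theorem eq_of_preconnected_of_adj {α β : Type*} {H : SimpleGraph α} (hconn : H.Preconnected)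
    {g : α → β} (hg : ∀ a b, H.Adj a b → g a = g b) (a b : α) : g a = g b := by
  obtain ⟨w⟩ := hconn a b
  induction w with
  | nil => rfl
  | cons hadj _ ih => exact (hg _ _ hadj).trans ih

section Pentagon

/-- The colouring of the edges of `K₅` by a pentagon in colour `0` and its complementary pentagon in
colour `1`. Colour `2` on the diagonal is the colour used inside the parts of a blow-up. -/
def pentagonColoring (a b : Fin 5) : Fin 3 :=
  if a = b then 2 else if (cycleGraph 5).Adj a b then 0 else 1

theorem pentagonColoring_comm : ∀ a b, pentagonColoring a b = pentagonColoring b a := by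
  decide

theorem pentagonColoring_eq_two_iff : ∀ {a b}, pentagonColoring a b = 2 ↔ a = b := by
  decide

theorem pentagonColoring_not_rainbow : ∀ a b d,
    ¬ (pentagonColoring a b ≠ pentagonColoring b d ∧ pentagonColoring b d ≠ pentagonColoring a d ∧
      pentagonColoring a b ≠ pentagonColoring a d) := by
  decide

theorem pentagonColoring_eq_two_of_triangle : ∀ {a b d i}, pentagonColoring a b = i →
    pentagonColoring a d = i → pentagonColoring b d = i → i = 2 := by
  decide

/-- The blow-up of `pentagonColoring` in which `p` sends each vertex to its part. -/
def pentagonBlowup {V : Type*} (p : V → Fin 5) (x y : V) : Fin 3 :=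
  pentagonColoring (p x) (p y)

variable {α V : Type*} {H : SimpleGraph α} (G : SimpleGraph V) (p : V → Fin 5)

theorem pentagonBlowup_comm (x y : V) : pentagonBlowup p x y = pentagonBlowup p y x :=
  pentagonColoring_comm _ _

theorem noRainbowTriangle_pentagonBlowup : NoRainbowTriangle G (pentagonBlowup p) := by
  rintro ⟨x, y, z, -, -, -, hrainbow⟩
  exact pentagonColoring_not_rainbow _ _ _ hrainbow

theorem not_isMonoCopy_pentagonBlowup [Fintype V] [Fintype α] (hconn : H.Preconnected)
    (htri : ¬ H.CliqueFree 3) (hp : ∀ j, Fintype.card {x // p x = j} < Fintype.card α) :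
    ¬ IsMonoCopy G (pentagonBlowup p) H := by
  rintro ⟨f, i, hf, hmono⟩
  obtain ⟨a, b, d, hab, had, hbd⟩ : ∃ a b d, H.Adj a b ∧ H.Adj a d ∧ H.Adj b d := by
    classical
    simp only [CliqueFree, not_forall, not_not, is3Clique_iff] at htri
    obtain ⟨-, a, b, d, hab, had, hbd, -⟩ := htri
    exact ⟨a, b, d, hab, had, hbd⟩
  have hi : i = 2 := pentagonColoring_eq_two_of_triangle
    (hmono a b hab).2 (hmono a d had).2 (hmono b d hbd).2
  have hpart : ∀ x, p (f x) = p (f a) := fun x =>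
    eq_of_preconnected_of_adj hconn (g := p ∘ f)
      (fun x y hxy => pentagonColoring_eq_two_iff.mp ((hmono x y hxy).2.trans hi)) x a
  refine (hp (p (f a))).not_ge (Fintype.card_le_of_injective (fun x => ⟨f x, hpart x⟩) ?_)
  exact fun x y hxy => hf (congrArg Subtype.val hxy)

end Pentagon

theorem card_divNat_eq_le {m n : ℕ} (j : Fin m) :
    Fintype.card {x : Fin (m * n) // x.divNat = j} ≤ n := by
  have hinj : Function.Injective fun x : {x : Fin (m * n) // x.divNat = j} => x.1.modNat :=
    fun x y hxy => Subtype.ext <|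
      finProdFinEquiv.symm.injective (Prod.ext (x.2.trans y.2.symm) hxy)
  simpa using Fintype.card_le_of_injective _ hinj

theorem isUniversal_zero_kipasG (m : ℕ) : (kipasG m).IsUniversal 0 := by
  intro b hb
  simp [kipasG, hb]

theorem not_cliqueFree_three_kipasG {m : ℕ} (hm : 2 ≤ m) : ¬ (kipasG m).CliqueFree 3 := by
  have h01 : (kipasG m).Adj 0 ⟨1, by omega⟩ :=
    isUniversal_zero_kipasG m (by simp [Fin.ext_iff])
  have h02 : (kipasG m).Adj 0 ⟨2, by omega⟩ :=
    isUniversal_zero_kipasG m (by simp [Fin.ext_iff])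
  have h12 : (kipasG m).Adj ⟨1, by omega⟩ ⟨2, by omega⟩ := by simp [kipasG]
  exact (is3Clique_iff.mpr ⟨_, _, _, h01, h02, h12, rfl⟩).not_cliqueFree

theorem kipas_gallai3_lower_5m_general {α : Type*} [Fintype α] {H : SimpleGraph α} {n : ℕ}
    (hconn : H.Preconnected) (htri : ¬ H.CliqueFree 3) (hn : n < Fintype.card α) :
    (∃ c : Fin (5 * n) → Fin (5 * n) → Fin 3, (∀ x y, c x y = c y x) ∧
      NoRainbowTriangle (⊤ : SimpleGraph (Fin (5 * n))) c ∧
      ¬ IsMonoCopy (⊤ : SimpleGraph (Fin (5 * n))) c H) ∧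
    5 * n + 1 ≤ GallaiRamsey 3 H := by
  let part : Fin (5 * n) → Fin 5 := Fin.divNat
  have hcomm := pentagonBlowup_comm part
  have hgallai := noRainbowTriangle_pentagonBlowup ⊤ part
  have hmono := not_isMonoCopy_pentagonBlowup ⊤ part hconn htri
    fun j => (card_divNat_eq_le j).trans_lt hn
  exact ⟨⟨_, hcomm, hgallai, hmono⟩, lt_gallaiRamsey hcomm hgallai hmono⟩

/-- For every `m ≥ 6` there is a Gallai 3-coloring of `K_{5m}` with no
monochromatic kipas `K̂_m`; consequently `GR_3(K̂_m) ≥ 5m + 1`. -/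
theorem kipas_gallai3_lower_5m (m : ℕ) (hm : 6 ≤ m) :
    (∃ c : Fin (5 * m) → Fin (5 * m) → Fin 3, (∀ x y, c x y = c y x) ∧
      NoRainbowTriangle (⊤ : SimpleGraph (Fin (5 * m))) c ∧
      ¬ IsMonoCopy (⊤ : SimpleGraph (Fin (5 * m))) c (kipasG m)) ∧
    5 * m + 1 ≤ GallaiRamsey 3 (kipasG m) :=
  kipas_gallai3_lower_5m_general (Connected.of_isUniversal (isUniversal_zero_kipasG m)).preconnected
    (not_cliqueFree_three_kipasG (by omega)) (by simp)
end
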